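/- For every nonnegative integer n, the identity Σ_{D∈Dyck_{2n}} q^{H(D)} Π_{(a,b)∈D} 1/(1−q^{2b+1}) = (1/(1−q)) Σ_{D∈Dyck_{2n}} wt_w(D) holds in ℚ(q), where wt_w(D) = Π_{i≥0} w_i^{m_i(D)}, m_i(D) is the number of up steps of D going from height i to height i+1, and w_i = q^i/((1−q^{2i+1})(1−q^{2i+3})) if i is even and w_i = q^{3i+2}/((1−q^{2i+1})(1−q^{2i+3})) if i is odd. -/

import Mathlib

open Finset

attribute [local instance 10] Classical.propDecidable

noncomputable section

namespace Paper

/-! ### Words and permutation statistics (all words are 1-based). -/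

/-- The word (one-line notation, 1-based) of a permutation of `{1, …, N}`:
`word π i = π(i)` for `1 ≤ i ≤ N`, and `0` otherwise. -/
def word {N : ℕ} (π : Equiv.Perm (Fin N)) (i : ℕ) : ℕ :=
  if h : 1 ≤ i ∧ i ≤ N then (π ⟨i - 1, by omega⟩ : ℕ) + 1 else 0

/-- The major index of a word of length `N`: the sum of the descents. -/
def majW (N : ℕ) (w : ℕ → ℕ) : ℕ :=
  ∑ i ∈ Finset.Icc 1 (N - 1), if w (i + 1) < w i then i else 0

/-- The number of inversions of a word of length `N`. -/
def invW (N : ℕ) (w : ℕ → ℕ) : ℕ :=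
  (((Finset.Icc 1 N) ×ˢ (Finset.Icc 1 N)).filter
    fun p => p.1 < p.2 ∧ w p.2 < w p.1).card

/-- The number of descents of a word of length `m`. -/
def desW (m : ℕ) (w : ℕ → ℕ) : ℕ :=
  ((Finset.Icc 1 (m - 1)).filter fun i => w (i + 1) < w i).card

/-- The number of ascents of a word of length `m`. -/
def ascW (m : ℕ) (w : ℕ → ℕ) : ℕ :=
  ((Finset.Icc 1 (m - 1)).filter fun i => w i < w (i + 1)).card

/-- The number of non-descents of a word of length `m`. -/
def ndesW (m : ℕ) (w : ℕ → ℕ) : ℕ :=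
  ((Finset.Icc 1 m).filter fun i => i = m ∨ w i < w (i + 1)).card

/-- The number of non-ascents of a word of length `m`. -/
def nascW (m : ℕ) (w : ℕ → ℕ) : ℕ :=
  ((Finset.Icc 1 m).filter fun i => i = m ∨ ¬ w i < w (i + 1)).card

/-- `π_e = π₂π₄⋯`, the subword of even-position entries, as a 1-based word. -/
def evenWord {N : ℕ} (π : Equiv.Perm (Fin N)) (j : ℕ) : ℕ := word π (2 * j)

/-- `π_o = π₁π₃⋯`, the subword of odd-position entries, as a 1-based word. -/
def oddWord {N : ℕ} (π : Equiv.Perm (Fin N)) (j : ℕ) : ℕ := word π (2 * j - 1)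

/-- A word of length `N` is alternating: `w₁ < w₂ > w₃ < w₄ > ⋯`. -/
def IsAltW (N : ℕ) (w : ℕ → ℕ) : Prop :=
  ∀ i ∈ Finset.Icc 1 (N - 1), (i % 2 = 1 → w i < w (i + 1)) ∧ (i % 2 = 0 → w (i + 1) < w i)

/-- A word of length `N` is reverse alternating: `w₁ > w₂ < w₃ > w₄ < ⋯`. -/
def IsRaltW (N : ℕ) (w : ℕ → ℕ) : Prop :=
  ∀ i ∈ Finset.Icc 1 (N - 1), (i % 2 = 1 → w (i + 1) < w i) ∧ (i % 2 = 0 → w i < w (i + 1))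

/-- `Alt_N`, the set of alternating permutations of `{1, …, N}`. -/
def altPerms (N : ℕ) : Finset (Equiv.Perm (Fin N)) :=
  Finset.univ.filter fun π => IsAltW N (word π)

/-- `Ralt_N`, the set of reverse alternating permutations of `{1, …, N}`. -/
def raltPerms (N : ℕ) : Finset (Equiv.Perm (Fin N)) :=
  Finset.univ.filter fun π => IsRaltW N (word π)

/-- `κ_N = (1)(2,3)(4,5)⋯`, acting on the 1-based values `{1, …, N}`. -/
def kappaNat (N j : ℕ) : ℕ :=
  if j % 2 = 0 ∧ 2 ≤ j ∧ j + 1 ≤ N then j + 1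
  else if j % 2 = 1 ∧ 3 ≤ j ∧ j ≤ N then j - 1
  else j

/-- `η_N = (1,2)(3,4)⋯`, acting on the 1-based values `{1, …, N}`. -/
def etaNat (N j : ℕ) : ℕ :=
  if j % 2 = 1 ∧ j + 1 ≤ N then j + 1
  else if j % 2 = 0 ∧ 2 ≤ j ∧ j ≤ N then j - 1
  else j

/-- `maj(π⁻¹)`. -/
def majInv (N : ℕ) (π : Equiv.Perm (Fin N)) : ℕ := majW N (word π.symm)

/-- `maj(κ_N π⁻¹)`. -/
def majKappaInv (N : ℕ) (π : Equiv.Perm (Fin N)) : ℕ :=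
  majW N fun i => kappaNat N (word π.symm i)

/-- `maj(η_N π⁻¹)`. -/
def majEtaInv (N : ℕ) (π : Equiv.Perm (Fin N)) : ℕ :=
  majW N fun i => etaNat N (word π.symm i)

/-- The reversal permutation `i ↦ N + 1 - i` of `Fin N`. -/
def revPerm (N : ℕ) : Equiv.Perm (Fin N) :=
  ⟨Fin.rev, Fin.rev, fun i => Fin.rev_rev i, fun i => Fin.rev_rev i⟩

/-- `φ(π)ᵢ = (N+1) - π_{N+1-i}`. -/
def phiMap {N : ℕ} (π : Equiv.Perm (Fin N)) : Equiv.Perm (Fin N) :=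
  ((revPerm N).trans π).trans (revPerm N)

/-! ### Lattice paths.

A path with `L` unit steps is encoded by `s : Fin L → Bool` (`true` = up-step `(1,1)`,
`false` = down-step `(1,-1)`). -/

/-- The vertical displacement of the `j`-th step. -/
def stepVal {L : ℕ} (s : Fin L → Bool) (j : ℕ) : ℤ :=
  if h : j < L then (if s ⟨j, h⟩ then 1 else -1) else 0

/-- The height of the path after `i` steps. -/
def pht {L : ℕ} (s : Fin L → Bool) (i : ℕ) : ℤ := ∑ j ∈ Finset.range i, stepVal s j

/-- A Dyck path: stays (weakly) above the `x`-axis and ends at height `0`. -/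
def IsDyck {L : ℕ} (s : Fin L → Bool) : Prop :=
  (∀ i ∈ Finset.range (L + 1), 0 ≤ pht s i) ∧ pht s L = 0

/-- The Dyck paths with `L` steps. -/
def dyckPaths (L : ℕ) : Finset (Fin L → Bool) := Finset.univ.filter fun s => IsDyck s

/-- The (indices of the) valleys of a path: a down-step followed by an up-step. -/
def valleys {L : ℕ} (s : Fin L → Bool) : Finset ℕ :=
  (Finset.Icc 1 (L - 1)).filter fun i => stepVal s (i - 1) = -1 ∧ stepVal s i = 1

/-- The (indices of the) peaks of a path: an up-step followed by a down-step. -/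
def peaks {L : ℕ} (s : Fin L → Bool) : Finset ℕ :=
  (Finset.Icc 1 (L - 1)).filter fun i => stepVal s (i - 1) = 1 ∧ stepVal s i = -1

/-- The (indices of the) high peaks of a path: peaks of height at least `2`. -/
def highPeaks {L : ℕ} (s : Fin L → Bool) : Finset ℕ :=
  (peaks s).filter fun i => 2 ≤ pht s i

/-- The height over abscissa `x` of a path starting at `(-m, 0)`. -/
def aht (m : ℕ) {L : ℕ} (s : Fin L → Bool) (x : ℤ) : ℤ := pht s (x + m).toNat

/-- `D₁ < D₂`, for `D₁` starting at `(-m₁,0)` and `D₂` at `(-m₂,0)`, `m₁ ≤ m₂`: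
strictly below on the common range of abscissas. -/
def PathLT (m₁ m₂ : ℕ) {L₁ L₂ : ℕ} (s₁ : Fin L₁ → Bool) (s₂ : Fin L₂ → Bool) : Prop :=
  ∀ x ∈ Finset.Icc (-(m₁ : ℤ)) (m₁ : ℤ), aht m₁ s₁ x < aht m₂ s₂ x

/-- `D₁ ≤ D₂`: weakly below, sharing no step. -/
def PathLE (m₁ m₂ : ℕ) {L₁ L₂ : ℕ} (s₁ : Fin L₁ → Bool) (s₂ : Fin L₂ → Bool) : Prop :=
  (∀ x ∈ Finset.Icc (-(m₁ : ℤ)) (m₁ : ℤ), aht m₁ s₁ x ≤ aht m₂ s₂ x) ∧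
    ∀ x ∈ Finset.Icc (-(m₁ : ℤ)) ((m₁ : ℤ) - 1),
      ¬(aht m₁ s₁ x = aht m₂ s₂ x ∧ aht m₁ s₁ (x + 1) = aht m₂ s₂ (x + 1))

/-- The abscissas of the common lattice points of two paths. -/
def interPts (m₁ m₂ : ℕ) {L₁ L₂ : ℕ} (s₁ : Fin L₁ → Bool) (s₂ : Fin L₂ → Bool) : Finset ℤ :=
  (Finset.Icc (-(m₁ : ℤ)) (m₁ : ℤ)).filter fun x => aht m₁ s₁ x = aht m₂ s₂ x

/-- `Dyck^k_{2n}`: tuples `(D₁, …, D_k)` with `D_i ∈ Dyck((-n-2i+2,0) → (n+2i-2,0))`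
(0-based: `D_i` has half-length `n + 2i`). -/
abbrev DyckTuple (n k : ℕ) := ∀ i : Fin k, Fin (2 * (n + 2 * (i : ℕ))) → Bool

/-- The tuples `(D₁ ≤ D₂ ≤ ⋯ ≤ D_k) ∈ Dyck^k_{2n}`. -/
def weakTuples (n k : ℕ) : Finset (DyckTuple n k) :=
  Finset.univ.filter fun D =>
    (∀ i : Fin k, IsDyck (D i)) ∧
      ∀ (i : ℕ) (h : i + 1 < k),
        PathLE (n + 2 * i) (n + 2 * (i + 1)) (D ⟨i, by omega⟩) (D ⟨i + 1, h⟩)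

/-- The tuples `(D₁ < D₂ < ⋯ < D_k) ∈ Dyck^k_{2n}`. -/
def strictTuples (n k : ℕ) : Finset (DyckTuple n k) :=
  Finset.univ.filter fun D =>
    (∀ i : Fin k, IsDyck (D i)) ∧
      ∀ (i : ℕ) (h : i + 1 < k),
        PathLT (n + 2 * i) (n + 2 * (i + 1)) (D ⟨i, by omega⟩) (D ⟨i + 1, h⟩)

/-- The lattice points of a path starting at `(-m, 0)`, as a finite subset of `ℤ × ℤ`. -/
def pathPoints (m : ℕ) {L : ℕ} (s : Fin L → Bool) : Finset (ℤ × ℤ) :=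
  (Finset.range (L + 1)).image fun t : ℕ => (-(m : ℤ) + (t : ℤ), pht s t)

/-- The non-valley lattice points of a path starting at `(-m, 0)`. -/
def nonValleyPoints (m : ℕ) {L : ℕ} (s : Fin L → Bool) : Finset (ℤ × ℤ) :=
  ((Finset.range (L + 1)).filter fun t => t ∉ valleys s).image
    fun t : ℕ => (-(m : ℤ) + (t : ℤ), pht s t)

section Weights

variable {F : Type*} [Field F]

/-- The `i`-th lattice point (in `ℤ × ℕ`) of a path starting at `(a, 0)`. -/
def ptOf (a : ℤ) {L : ℕ} (s : Fin L → Bool) (i : ℕ) : ℤ × ℕ := (a + i, (pht s i).toNat)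

/-- `wt_V(D) = ∏_{p ∈ D} wt(p) · ∏_{p ∈ V(D)} w̃t(p)` for a path starting at `(a, 0)`. -/
def wtVal (wt wte : ℤ × ℕ → F) (a : ℤ) {L : ℕ} (s : Fin L → Bool) : F :=
  (∏ i ∈ Finset.range (L + 1), wt (ptOf a s i)) * ∏ i ∈ valleys s, wte (ptOf a s i)

/-- `wt_HP(D) = ∏_{p ∈ D} wt(p) · ∏_{p ∈ HP(D)} w̃t(p)` for a path starting at `(a, 0)`. -/
def wtHigh (wt wte : ℤ × ℕ → F) (a : ℤ) {L : ℕ} (s : Fin L → Bool) : F :=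
  (∏ i ∈ Finset.range (L + 1), wt (ptOf a s i)) * ∏ i ∈ highPeaks s, wte (ptOf a s i)

/-- `∏_{p ∈ D₁ ∩ D₂} f(p)`, for `D₁` starting at `(-m₁,0)` and `D₂` at `(-m₂,0)`. -/
def interProd (f : ℤ × ℕ → F) (m₁ m₂ : ℕ) {L₁ L₂ : ℕ}
    (s₁ : Fin L₁ → Bool) (s₂ : Fin L₂ → Bool) : F :=
  ∏ x ∈ interPts m₁ m₂ s₁ s₂, f (x, (aht m₁ s₁ x).toNat)

/-- The sum over `(D₁ ≤ ⋯ ≤ D_k) ∈ Dyck^k_{2n}` of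
`wt_V(D₁)⋯wt_V(D_k) ∏_{i=1}^{k-1} ∏_{p ∈ D_i ∩ D_{i+1}} (1 - w̃t(p)⁻¹)`. -/
def weakSum (wt wte : ℤ × ℕ → F) (n k : ℕ) : F :=
  ∑ D ∈ weakTuples n k,
    (∏ i : Fin k, wtVal wt wte (-(n : ℤ) - 2 * (i : ℕ)) (D i)) *
      ∏ j : Fin (k - 1),
        interProd (fun p => 1 - (wte p)⁻¹) (n + 2 * (j : ℕ)) (n + 2 * ((j : ℕ) + 1))
          (D ⟨(j : ℕ), by have := j.isLt; omega⟩)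
          (D ⟨(j : ℕ) + 1, by have := j.isLt; omega⟩)

/-- The sum over `(D₁ < ⋯ < D_k) ∈ Dyck^k_{2n}` of `wt_V(D₁)⋯wt_V(D_k)`. -/
def strictSum (wt wte : ℤ × ℕ → F) (n k : ℕ) : F :=
  ∑ D ∈ strictTuples n k, ∏ i : Fin k, wtVal wt wte (-(n : ℤ) - 2 * (i : ℕ)) (D i)

end Weights

/-! ### Schröder paths.

A path with `L` steps is encoded by `st : Fin L → Fin 3`
(`0` = up-step `(1,1)`, `1` = down-step `(1,-1)`, `2` = horizontal step `(2,0)`). -/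

/-- The horizontal displacement of the `j`-th step. -/
def stepX {L : ℕ} (st : Fin L → Fin 3) (j : ℕ) : ℕ :=
  if h : j < L then (if st ⟨j, h⟩ = 2 then 2 else 1) else 0

/-- The vertical displacement of the `j`-th step. -/
def stepY {L : ℕ} (st : Fin L → Fin 3) (j : ℕ) : ℤ :=
  if h : j < L then (if st ⟨j, h⟩ = 0 then 1 else if st ⟨j, h⟩ = 1 then -1 else 0) else 0

/-- The horizontal position (relative to the start) after `j` steps. -/
def xpos {L : ℕ} (st : Fin L → Fin 3) (j : ℕ) : ℕ := ∑ t ∈ Finset.range j, stepX st t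

/-- The height after `j` steps. -/
def ypos {L : ℕ} (st : Fin L → Fin 3) (j : ℕ) : ℤ := ∑ t ∈ Finset.range j, stepY st t

/-- A (little) Schröder path of horizontal span `2m`: nonnegative heights, ends at
height `0`, and no horizontal step on the `x`-axis. -/
def IsSch (m : ℕ) {L : ℕ} (st : Fin L → Fin 3) : Prop :=
  xpos st L = 2 * m ∧ (∀ j ∈ Finset.range (L + 1), 0 ≤ ypos st j) ∧ ypos st L = 0 ∧
    ∀ j ∈ Finset.range L, stepX st j = 2 → ypos st j ≠ 0

/-- The height of a Schröder path over the relative abscissa `x` (midpoints of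
horizontal steps get the height of that horizontal step). -/
def schHeight {L : ℕ} (st : Fin L → Fin 3) (x : ℕ) : ℤ :=
  ∑ t ∈ Finset.range L, if xpos st (t + 1) ≤ x then stepY st t else 0

/-- The relative abscissa `x` is the midpoint of a horizontal step. -/
def IsHMid {L : ℕ} (st : Fin L → Fin 3) (x : ℕ) : Prop :=
  ∃ j ∈ Finset.range L, stepX st j = 2 ∧ xpos st j + 1 = x

/-- The number of horizontal steps of a Schröder path. -/
def hsCount {L : ℕ} (st : Fin L → Fin 3) : ℕ :=
  ((Finset.range L).filter fun j => stepX st j = 2).card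

/-- `wt_Sch(c, S) = c^{hs(S)} ∏_{p ∈ S} wt(p)` for a Schröder path starting at `(a,0)`. -/
def wtSch {F : Type*} [Field F] (wt : ℤ × ℕ → F) (c : F) (a : ℤ) {L : ℕ}
    (st : Fin L → Fin 3) : F :=
  c ^ hsCount st * ∏ j ∈ Finset.range (L + 1), wt (a + xpos st j, (ypos st j).toNat)

/-- `φ_V(S) = D`: the Dyck path `D` (with `L'` steps) is obtained from the Schröder
path `S` by replacing each horizontal step by a down-step followed by an up-step. -/
def PhiVEq {L L' : ℕ} (st : Fin L → Fin 3) (s : Fin L' → Bool) : Prop :=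
  ∀ x ∈ Finset.range (L' + 1),
    pht s x = schHeight st x - (if IsHMid st x then 1 else 0)

/-- `φ_HP(S) = D`: the Dyck path `D` is obtained from the Schröder path `S` by
replacing each horizontal step by an up-step followed by a down-step. -/
def PhiHPEq {L L' : ℕ} (st : Fin L → Fin 3) (s : Fin L' → Bool) : Prop :=
  ∀ x ∈ Finset.range (L' + 1),
    pht s x = schHeight st x + (if IsHMid st x then 1 else 0)

/-! ### Young diagrams, excited and pleasant diagrams, reverse plane partitions. -/

/-- The cells (1-based, matrix coordinates) of the staircase `δ_m = (m-1, m-2, …, 1)`. -/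
def deltaCells (m : ℕ) : Finset (ℕ × ℕ) :=
  ((Finset.Icc 1 m) ×ˢ (Finset.Icc 1 m)).filter fun c => c.1 + c.2 ≤ m

/-- An excited move inside the Young diagram `lam`. -/
def ExcitedStep (lam : Finset (ℕ × ℕ)) (D D' : Finset (ℕ × ℕ)) : Prop :=
  ∃ i j : ℕ, (i, j) ∈ D ∧ (i + 1, j) ∉ D ∧ (i, j + 1) ∉ D ∧ (i + 1, j + 1) ∉ D ∧
    (i + 1, j + 1) ∈ lam ∧ D' = insert (i + 1, j + 1) (D.erase (i, j))

/-- `D` is an excited diagram of `lam/mu`. -/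
def IsExcited (lam mu D : Finset (ℕ × ℕ)) : Prop :=
  Relation.ReflTransGen (ExcitedStep lam) mu D

/-- `P` is a pleasant diagram of `lam/mu`: a subset of `lam \ D` for an excited diagram `D`. -/
def IsPleasant (lam mu : Finset (ℕ × ℕ)) (P : Finset (ℕ × ℕ)) : Prop :=
  ∃ D, IsExcited lam mu D ∧ P ⊆ lam \ D

/-- `p(lam/mu)`, the number of pleasant diagrams of `lam/mu`. -/
def pleasantCount (lam mu : Finset (ℕ × ℕ)) : ℕ :=
  Set.ncard {P : Finset (ℕ × ℕ) | IsPleasant lam mu P}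

/-- A reverse plane partition on the skew shape `shape`: a filling by nonnegative
integers (vanishing off the shape) weakly increasing along rows and columns. -/
def IsRPP (shape : Finset (ℕ × ℕ)) (f : ℕ × ℕ → ℕ) : Prop :=
  (∀ c, c ∉ shape → f c = 0) ∧
    (∀ i j : ℕ, (i, j) ∈ shape → (i, j + 1) ∈ shape → f (i, j) ≤ f (i, j + 1)) ∧
    ∀ i j : ℕ, (i, j) ∈ shape → (i + 1, j) ∈ shape → f (i, j) ≤ f (i + 1, j)

/-- `∑_{π ∈ RPP(shape)} q^{|π|}` as a formal power series in `q`. -/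
def rppGF (shape : Finset (ℕ × ℕ)) : PowerSeries ℚ :=
  PowerSeries.mk fun N =>
    (Set.ncard {f : ℕ × ℕ → ℕ | IsRPP shape f ∧ ∑ c ∈ shape, f c = N} : ℚ)

/-- `(q; q)_m = ∏_{i=1}^m (1 - q^i)` as a formal power series. -/
def pochPS (m : ℕ) : PowerSeries ℚ :=
  ∏ i ∈ Finset.Icc 1 m, (1 - (PowerSeries.X : PowerSeries ℚ) ^ i)

/-- `E*_N(q) = ∑_{π ∈ Alt_N} q^{maj(κ_N π⁻¹)}` as a formal power series. -/
def EstarPS (N : ℕ) : PowerSeries ℚ :=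
  ∑ π ∈ altPerms N, (PowerSeries.X : PowerSeries ℚ) ^ majKappaInv N π

/-- `E*_m(q)/(q;q)_m` for `m ≥ 0`, and `0` for `m < 0`. -/
def EstarEntry (m : ℤ) : PowerSeries ℚ :=
  if m < 0 then 0 else EstarPS m.toNat * (pochPS m.toNat)⁻¹

/-- The Gaussian binomial coefficient `[N choose M]_q` as a formal power series. -/
def gaussPS (N M : ℕ) : PowerSeries ℚ :=
  pochPS N * (pochPS M * pochPS (N - M))⁻¹

section PathSums

variable {F : Type*} [Field F]

/-- The sum over all paths with `L` steps from height `h` to height `0` staying weakly above the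
`x`-axis, where a step starting at height `y` has weight `f p c y`; here `c` tells whether the step
is an up-step and `p` whether the step before it is one. The step before the first one is given. -/
def pathSum (f : Bool → Bool → ℕ → F) : ℕ → Bool → ℕ → F
  | 0, _, h => if h = 0 then 1 else 0
  | L + 1, p, h => f p true h * pathSum f L true (h + 1) +
      if h = 0 then 0 else f p false h * pathSum f L false (h - 1)

/-- A family of power series solving, up to a common factor `β`, the linear system satisfied by
the generating functions of `pathSum` consists of these generating functions multiplied by `β`. -/
lemma eq_mul_mk_pathSum (f : Bool → Bool → ℕ → F) (N : ℕ → Bool → PowerSeries F)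
    (β : PowerSeries F)
    (hN : ∀ h p, N h p = (if h = 0 then β else 0) +
      PowerSeries.X * (PowerSeries.C (f p true h) * N (h + 1) true +
        if h = 0 then 0 else PowerSeries.C (f p false h) * N (h - 1) false))
    (h : ℕ) (p : Bool) : N h p = β * PowerSeries.mk fun L => pathSum f L p h := by
  set W : ℕ → Bool → PowerSeries F := fun h p => PowerSeries.mk fun L => pathSum f L p h with hW
  have hrec : ∀ h p, W h p = (if h = 0 then 1 else 0) +
      PowerSeries.X * (PowerSeries.C (f p true h) * W (h + 1) true +
        if h = 0 then 0 else PowerSeries.C (f p false h) * W (h - 1) false) := by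
    intro h p
    ext L
    cases L with
    | zero => split_ifs with hh <;> simp [hW, pathSum, hh]
    | succ L =>
      rw [map_add, PowerSeries.coeff_succ_X_mul]
      split_ifs with hh <;> simp [hW, pathSum, hh, PowerSeries.coeff_one]
  have hΔ : ∀ L h p, PowerSeries.coeff L (N h p - β * W h p) = 0 := by
    intro L
    induction L with
    | zero =>
      intro h p
      rw [hN, hrec]
      split_ifs <;> simp
    | succ L ih =>
      intro h p
      have key : N h p - β * W h p = PowerSeries.X *
          (PowerSeries.C (f p true h) * (N (h + 1) true - β * W (h + 1) true) +
          PowerSeries.C (if h = 0 then 0 else f p false h) *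
            (N (h - 1) false - β * W (h - 1) false)) := by
        rw [hN, hrec]
        split_ifs <;> simp <;> ring
      rw [key, PowerSeries.coeff_succ_X_mul, map_add, PowerSeries.coeff_C_mul,
        PowerSeries.coeff_C_mul, ih, ih]
      simp
  exact sub_eq_zero.mp (PowerSeries.ext fun L => by rw [hΔ, map_zero])

end PathSums

section ContiguousRelations

variable {F : Type*} [Field F] (q : F)

/-- The basic hypergeometric series
`∑ⱼ (-1)^j q^{j(j-1)+2jt} z^j / ((q²; q²)_j (q^{2k+1}; q²)_j)`. -/
def hypSeries (t k : ℕ) : PowerSeries F :=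
  PowerSeries.mk fun j => ∏ i ∈ Finset.range j,
    -(q ^ (2 * i + 2 * t) / ((1 - q ^ (2 * i + 2)) * (1 - q ^ (2 * k + 1 + 2 * i))))

lemma coeff_hypSeries_succ (t k j : ℕ) :
    PowerSeries.coeff (j + 1) (hypSeries q t k) = PowerSeries.coeff j (hypSeries q t k) *
      -(q ^ (2 * j + 2 * t) / ((1 - q ^ (2 * j + 2)) * (1 - q ^ (2 * k + 1 + 2 * j)))) := by
  simp [hypSeries, Finset.prod_range_succ]

lemma constantCoeff_hypSeries (t k : ℕ) :
    PowerSeries.constantCoeff (hypSeries q t k) = 1 := by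
  simp [hypSeries]

lemma coeff_hypSeries_shift_left (t k j : ℕ) :
    PowerSeries.coeff j (hypSeries q (t + 1) k) =
      q ^ (2 * j) * PowerSeries.coeff j (hypSeries q t k) := by
  induction j with
  | zero => simp [constantCoeff_hypSeries]
  | succ j ih => rw [coeff_hypSeries_succ, coeff_hypSeries_succ, ih]; ring

variable {q} (hq : ∀ m : ℕ, 1 - q ^ (m + 1) ≠ 0)
include hq

lemma coeff_hypSeries_shift_right (t k j : ℕ) :
    PowerSeries.coeff j (hypSeries q t (k + 1)) =
      (1 - q ^ (2 * k + 1)) / (1 - q ^ (2 * k + 1 + 2 * j)) *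
        PowerSeries.coeff j (hypSeries q t k) := by
  induction j with
  | zero => simp [constantCoeff_hypSeries, hq]
  | succ j ih =>
    rw [coeff_hypSeries_succ, coeff_hypSeries_succ, ih]
    have h1 := hq (2 * k + 2 * j)
    have h2 := hq (2 * j + 1)
    have h3 := hq (2 * k + 2 * j + 2)
    rw [show 2 * (k + 1) + 1 + 2 * j = 2 * k + 2 * j + 2 + 1 by ring,
      show 2 * k + 1 + 2 * (j + 1) = 2 * k + 2 * j + 2 + 1 by ring,
      show 2 * k + 1 + 2 * j = 2 * k + 2 * j + 1 by ring, show 2 * j + 2 = 2 * j + 1 + 1 by ring]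
    field_simp

lemma hypSeries_left (t k : ℕ) :
    hypSeries q (t + 1) k = hypSeries q t k +
      PowerSeries.C (q ^ (2 * t) / (1 - q ^ (2 * k + 1))) * PowerSeries.X *
        hypSeries q (t + 1) (k + 1) := by
  ext j
  rw [mul_assoc, map_add, PowerSeries.coeff_C_mul]
  cases j with
  | zero => simp [constantCoeff_hypSeries]
  | succ j =>
    rw [PowerSeries.coeff_succ_X_mul, coeff_hypSeries_shift_right hq,
      coeff_hypSeries_shift_left, coeff_hypSeries_shift_left, coeff_hypSeries_succ]
    have h1 := hq (2 * k + 2 * j)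
    have h2 := hq (2 * j + 1)
    have h3 := hq (2 * k)
    rw [show 2 * k + 1 + 2 * j = 2 * k + 2 * j + 1 by ring, show 2 * j + 2 = 2 * j + 1 + 1 by ring]
    field_simp
    ring

lemma hypSeries_right (t k : ℕ) :
    hypSeries q t (k + 1) = hypSeries q t k +
      PowerSeries.C (q ^ (2 * t + 2 * k + 1) /
        ((1 - q ^ (2 * k + 1)) * (1 - q ^ (2 * k + 3)))) * PowerSeries.X *
        hypSeries q (t + 1) (k + 2) := by
  ext j
  rw [mul_assoc, map_add, PowerSeries.coeff_C_mul]
  cases j with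
  | zero => simp [constantCoeff_hypSeries]
  | succ j =>
    rw [PowerSeries.coeff_succ_X_mul, coeff_hypSeries_shift_right hq,
      coeff_hypSeries_shift_right hq, coeff_hypSeries_shift_right hq,
      coeff_hypSeries_shift_left, coeff_hypSeries_succ]
    have h1 := hq (2 * k + 2 * j)
    have h2 := hq (2 * j + 1)
    have h3 := hq (2 * k)
    have h4 := hq (2 * k + 2)
    have h5 := hq (2 * k + 2 * j + 2)
    rw [show 2 * (k + 1) + 1 + 2 * j = 2 * k + 2 * j + 2 + 1 by ring,
      show 2 * (k + 1) + 1 = 2 * k + 2 + 1 by ring,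
      show 2 * k + 3 = 2 * k + 2 + 1 by ring,
      show 2 * k + 1 + 2 * (j + 1) = 2 * k + 2 * j + 2 + 1 by ring,
      show 2 * k + 1 + 2 * j = 2 * k + 2 * j + 1 by ring, show 2 * j + 2 = 2 * j + 1 + 1 by ring]
    field_simp
    ring

lemma hypSeries_diag (t k : ℕ) :
    hypSeries q (t + 1) (k + 1) = hypSeries q t k +
      PowerSeries.C (q ^ (2 * t) /
        ((1 - q ^ (2 * k + 1)) * (1 - q ^ (2 * k + 3)))) * PowerSeries.X *
        hypSeries q (t + 1) (k + 2) := by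
  ext j
  rw [mul_assoc, map_add, PowerSeries.coeff_C_mul]
  cases j with
  | zero => simp [constantCoeff_hypSeries]
  | succ j =>
    rw [PowerSeries.coeff_succ_X_mul, coeff_hypSeries_shift_right hq,
      coeff_hypSeries_shift_right hq, coeff_hypSeries_shift_right hq,
      coeff_hypSeries_shift_left, coeff_hypSeries_shift_left, coeff_hypSeries_succ]
    have h1 := hq (2 * k + 2 * j)
    have h2 := hq (2 * j + 1)
    have h3 := hq (2 * k)
    have h4 := hq (2 * k + 2)
    have h5 := hq (2 * k + 2 * j + 2)
    rw [show 2 * (k + 1) + 1 + 2 * j = 2 * k + 2 * j + 2 + 1 by ring,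
      show 2 * (k + 1) + 1 = 2 * k + 2 + 1 by ring,
      show 2 * k + 3 = 2 * k + 2 + 1 by ring,
      show 2 * k + 1 + 2 * (j + 1) = 2 * k + 2 * j + 2 + 1 by ring,
      show 2 * k + 1 + 2 * j = 2 * k + 2 * j + 1 by ring, show 2 * j + 2 = 2 * j + 1 + 1 by ring]
    field_simp
    ring

end ContiguousRelations

section Comparison

variable {F : Type*} [Field F] (q : F)

/-- The weight `w_i`. -/
def upWeight (i : ℕ) : F :=
  if i % 2 = 0 then q ^ i / ((1 - q ^ (2 * i + 1)) * (1 - q ^ (2 * i + 3)))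
  else q ^ (3 * i + 2) / ((1 - q ^ (2 * i + 1)) * (1 - q ^ (2 * i + 3)))

/-- The step weights giving `wt_w`. -/
def upStepWeight (_ c : Bool) (h : ℕ) : F := if c then upWeight q h else 1

/-- The step weights giving the weight by lattice points and high peaks, up to the factor of the
last lattice point. -/
def highPeakStepWeight (p c : Bool) (h : ℕ) : F :=
  (1 - q ^ (2 * h + 1))⁻¹ * if p = true ∧ c = false ∧ 2 ≤ h then q ^ (2 * h + 1) else 1

variable {q} (hq : ∀ m : ℕ, 1 - q ^ (m + 1) ≠ 0)
include hq

lemma hypSeries_upWeight (h : ℕ) :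
    hypSeries q ((h + 2) / 2) (h + 1) = hypSeries q ((h + 1) / 2) h +
      PowerSeries.C (upWeight q h) * PowerSeries.X * hypSeries q ((h + 3) / 2) (h + 2) := by
  rcases Nat.even_or_odd' h with ⟨m, rfl | rfl⟩
  · rw [show (2 * m + 2) / 2 = m + 1 by omega, show (2 * m + 1) / 2 = m by omega,
      show (2 * m + 3) / 2 = m + 1 by omega, hypSeries_diag hq]
    simp [upWeight]
  · rw [show (2 * m + 1 + 2) / 2 = m + 1 by omega, show (2 * m + 1 + 1) / 2 = m + 1 by omega,
      show (2 * m + 1 + 3) / 2 = m + 1 + 1 by omega, hypSeries_right hq]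
    simp only [upWeight, show (2 * m + 1) % 2 = 1 by omega, one_ne_zero, if_false]
    ring_nf

lemma mul_mk_pathSum_upStepWeight :
    PowerSeries.expand 2 two_ne_zero (hypSeries q 1 1) =
      PowerSeries.expand 2 two_ne_zero (hypSeries q 0 0) *
        PowerSeries.mk fun L => pathSum (upStepWeight q) L false 0 := by
  have := eq_mul_mk_pathSum (upStepWeight q)
    (fun h _ => PowerSeries.X ^ h *
      PowerSeries.expand 2 two_ne_zero (hypSeries q ((h + 2) / 2) (h + 1)))
    (PowerSeries.expand 2 two_ne_zero (hypSeries q 0 0)) ?_ 0 false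
  · simpa using this
  intro h _
  rw [hypSeries_upWeight hq]
  simp only [map_add, map_mul, PowerSeries.expand_C, PowerSeries.expand_X]
  cases h with
  | zero => simp [upStepWeight]; ring
  | succ h =>
    simp [upStepWeight, show h + 1 + 1 = h + 2 by rfl, show h + 2 + 1 = h + 3 by rfl,
      show h + 1 + 3 = h + 1 + 1 + 2 by rfl]
    ring

lemma hypSeries_highPeak (h : ℕ) :
    hypSeries q 1 (h + 1) = hypSeries q 1 h +
      PowerSeries.C ((1 - q ^ (2 * h + 1))⁻¹ * (1 - q ^ (2 * h + 3))⁻¹) * PowerSeries.X *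
        (hypSeries q 1 (h + 2) - PowerSeries.C (1 - q ^ (2 * h + 3)) * hypSeries q 1 (h + 1)) := by
  have h1 := hypSeries_diag hq 0 h
  have h2 := hypSeries_left hq 0 h
  have h3 : PowerSeries.C ((1 - q ^ (2 * h + 1))⁻¹ * (1 - q ^ (2 * h + 3))⁻¹) *
      PowerSeries.C (1 - q ^ (2 * h + 3)) = PowerSeries.C (1 - q ^ (2 * h + 1))⁻¹ := by
    rw [← map_mul, inv_mul_cancel_right₀ (hq (2 * h + 2))]
  simp only [mul_zero, pow_zero, zero_add, one_div, mul_inv] at h1 h2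
  linear_combination h1 - h2 + PowerSeries.X * hypSeries q 1 (h + 1) * h3

lemma mul_mk_pathSum_highPeakStepWeight :
    PowerSeries.expand 2 two_ne_zero (hypSeries q 1 1) =
      PowerSeries.expand 2 two_ne_zero (hypSeries q 0 0) *
        PowerSeries.mk fun L => pathSum (highPeakStepWeight q) L false 0 := by
  have := eq_mul_mk_pathSum (highPeakStepWeight q)
    (fun h p => PowerSeries.X ^ h *
      PowerSeries.C (∏ i ∈ Finset.range h, (1 - q ^ (2 * (i + 1) + 1))⁻¹) *
      PowerSeries.expand 2 two_ne_zero (hypSeries q 1 (h + 1) -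
        PowerSeries.C (if p = true ∧ 2 ≤ h then 1 - q ^ (2 * h + 1) else 0) * hypSeries q 1 h))
    (PowerSeries.expand 2 two_ne_zero (hypSeries q 0 0)) ?_ 0 false
  · simpa using this
  intro h p
  cases h with
  | zero =>
    rw [hypSeries_diag hq 0 0]
    simp [highPeakStepWeight, PowerSeries.expand_C]
    ring
  | succ h =>
    have key := congrArg (PowerSeries.expand 2 two_ne_zero) (hypSeries_highPeak hq (h + 1))
    by_cases hp : p = true ∧ 1 ≤ h <;>
    · simp only [Finset.prod_range_succ, map_add, map_mul, map_sub, map_one, PowerSeries.expand_C,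
        PowerSeries.expand_X, highPeakStepWeight, hp, if_true, if_false, Nat.reduceLeDiff,
        Nat.add_eq_zero_iff, one_ne_zero, and_false, Nat.add_sub_cancel, true_and, false_and,
        Bool.false_eq_true, Bool.true_eq_false, map_zero, and_true, zero_mul, sub_zero] at key ⊢
      linear_combination (PowerSeries.X ^ (h + 1) *
        PowerSeries.C (∏ i ∈ Finset.range h, (1 - q ^ (2 * (i + 1) + 1))⁻¹) *
        PowerSeries.C (1 - q ^ (2 * (h + 1) + 1))⁻¹) * key

lemma pathSum_highPeakStepWeight (L : ℕ) :
    pathSum (highPeakStepWeight q) L false 0 = pathSum (upStepWeight q) L false 0 := by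
  have h0 : PowerSeries.expand 2 two_ne_zero (hypSeries q 0 0) ≠ 0 := fun h => by
    simpa [constantCoeff_hypSeries] using congrArg PowerSeries.constantCoeff h
  have h := mul_left_cancel₀ h0 ((mul_mk_pathSum_highPeakStepWeight hq).symm.trans
    (mul_mk_pathSum_upStepWeight hq))
  simpa using congrArg (PowerSeries.coeff L) h

end Comparison

section StepEncoding

lemma stepVal_cons_zero {L : ℕ} (b : Bool) (s : Fin L → Bool) :
    stepVal (Fin.cons b s : Fin (L + 1) → Bool) 0 = if b then 1 else -1 := by
  simp [stepVal]

lemma stepVal_cons_succ {L : ℕ} (b : Bool) (s : Fin L → Bool) (j : ℕ) :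
    stepVal (Fin.cons b s : Fin (L + 1) → Bool) (j + 1) = stepVal s j := by
  by_cases h : j < L
  · have : (Fin.cons b s : Fin (L + 1) → Bool) ⟨j + 1, by omega⟩ = s ⟨j, h⟩ :=
      Fin.cons_succ (α := fun _ => Bool) b s ⟨j, h⟩
    simp only [stepVal, h, Nat.add_lt_add_iff_right, dif_pos, this]
  · simp [stepVal, h]

lemma stepVal_eq_neg_one_iff {L : ℕ} (s : Fin L → Bool) {j : ℕ} (h : j < L) :
    stepVal s j = -1 ↔ stepVal s j ≠ 1 := by
  simp only [stepVal, h, dif_pos]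
  split_ifs <;> simp

lemma pht_zero {L : ℕ} (s : Fin L → Bool) : pht s 0 = 0 := by simp [pht]

lemma pht_cons_succ {L : ℕ} (b : Bool) (s : Fin L → Bool) (i : ℕ) :
    pht (Fin.cons b s : Fin (L + 1) → Bool) (i + 1) = (if b then 1 else -1) + pht s i := by
  simp only [pht, Finset.sum_range_succ', stepVal_cons_zero, stepVal_cons_succ]
  ring

lemma pht_le {L : ℕ} (s : Fin L → Bool) (i : ℕ) : pht s i ≤ i := by
  calc pht s i ≤ ∑ _j ∈ Finset.range i, (1 : ℤ) := Finset.sum_le_sum fun j _ => by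
        unfold stepVal
        split_ifs <;> norm_num
    _ = i := by simp

variable {F : Type*} [Field F]

/-- The product of the step weights of a path starting at height `h`. -/
def pathProd (f : Bool → Bool → ℕ → F) (p : Bool) (h : ℕ) {L : ℕ} (s : Fin L → Bool) : F :=
  ∏ i ∈ Finset.range L, f (decide (stepVal (Fin.cons p s : Fin (L + 1) → Bool) i = 1))
    (decide (stepVal s i = 1)) ((h : ℤ) + pht s i).toNat

lemma pathProd_cons (f : Bool → Bool → ℕ → F) (p b : Bool) {h h' : ℕ}
    (hh : (h' : ℤ) = h + if b then 1 else -1) {L : ℕ} (s : Fin L → Bool) :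
    pathProd f p h (Fin.cons b s : Fin (L + 1) → Bool) = f p b h * pathProd f b h' s := by
  unfold pathProd
  rw [Finset.prod_range_succ', mul_comm]
  congr 1
  · simp only [stepVal_cons_zero, pht_zero]
    cases p <;> cases b <;> simp
  · refine Finset.prod_congr rfl fun i _ => ?_
    rw [stepVal_cons_succ, stepVal_cons_succ, pht_cons_succ, hh, add_assoc]

lemma isDyck_of_mem_dyckPaths {L : ℕ} {s : Fin L → Bool} (hs : s ∈ dyckPaths L) : IsDyck s :=
  (Finset.mem_filter.mp hs).2

/-- The path starting at height `h` stays weakly above the `x`-axis and ends on it. -/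
def IsDyckFrom (h : ℤ) {L : ℕ} (s : Fin L → Bool) : Prop :=
  (∀ i ∈ Finset.range (L + 1), 0 ≤ h + pht s i) ∧ h + pht s L = 0

lemma isDyckFrom_cons {h : ℤ} (hh : 0 ≤ h) (b : Bool) {L : ℕ} (s : Fin L → Bool) :
    IsDyckFrom h (Fin.cons b s : Fin (L + 1) → Bool) ↔
      IsDyckFrom (h + if b then 1 else -1) s := by
  simp only [IsDyckFrom, pht_cons_succ, add_assoc]
  refine and_congr_left fun _ => ⟨fun H i hi => ?_, fun H i hi => ?_⟩
  · have := H (i + 1) (by simpa using hi)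
    rwa [pht_cons_succ] at this
  · cases i with
    | zero => simpa [pht_zero] using hh
    | succ i =>
      rw [pht_cons_succ]
      exact H i (by simpa using hi)

lemma sum_pathProd (f : Bool → Bool → ℕ → F) (L : ℕ) (p : Bool) (h : ℕ) :
    (∑ s : Fin L → Bool, if IsDyckFrom h s then pathProd f p h s else 0) = pathSum f L p h := by
  induction L generalizing p h with
  | zero => simp [IsDyckFrom, pathProd, pathSum, pht_zero]
  | succ L ih =>
    rw [← (Fin.consEquiv fun _ => Bool).sum_comp, Fintype.sum_prod_type, Fintype.sum_bool, pathSum]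
    have hh : (0 : ℤ) ≤ h := Int.natCast_nonneg h
    simp only [Fin.consEquiv, Equiv.coe_fn_mk, isDyckFrom_cons hh, if_true, Bool.false_eq_true,
      if_false]
    congr 1
    · rw [← ih, Finset.mul_sum]
      refine Finset.sum_congr rfl fun s _ => ?_
      rw [pathProd_cons f p true (h' := h + 1) (by simp)]
      push_cast
      split_ifs <;> simp
    · split_ifs with h0
      · refine Finset.sum_eq_zero fun s _ => if_neg fun H => ?_
        have := H.1 0 (by simp)
        simp [pht_zero, h0] at this
      · obtain ⟨m, rfl⟩ := Nat.exists_eq_succ_of_ne_zero h0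
        rw [Nat.succ_eq_add_one, Nat.add_sub_cancel, ← ih, Finset.mul_sum]
        refine Finset.sum_congr rfl fun s _ => ?_
        rw [pathProd_cons f p false (h' := m) (by simp)]
        push_cast
        rw [add_neg_cancel_right]
        split_ifs <;> simp

lemma sum_dyckPaths_pathProd (f : Bool → Bool → ℕ → F) (L : ℕ) :
    ∑ s ∈ dyckPaths L, pathProd f false 0 s = pathSum f L false 0 := by
  rw [← sum_pathProd, dyckPaths, Finset.sum_filter]
  refine Finset.sum_congr rfl fun s _ => ?_
  simp [IsDyck, IsDyckFrom]

variable (q : F)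

lemma prod_upWeight_pow_card {L : ℕ} {s : Fin L → Bool} (hs : IsDyck s) :
    ∏ i ∈ Finset.range L, upWeight q i ^
      ((Finset.range L).filter fun j => stepVal s j = 1 ∧ pht s j = (i : ℤ)).card =
      pathProd (upStepWeight q) false 0 s := by
  have hmaps : ∀ j ∈ (Finset.range L).filter (fun j => stepVal s j = 1),
      (pht s j).toNat ∈ Finset.range L := fun j hj => by
    have := pht_le s j
    simp only [Finset.mem_filter, Finset.mem_range] at hj ⊢
    omega
  simp only [pathProd, upStepWeight, decide_eq_true_eq, Nat.cast_zero, zero_add]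
  rw [← Finset.prod_filter, ← Finset.prod_fiberwise_of_maps_to hmaps]
  refine Finset.prod_congr rfl fun i _ => ?_
  rw [Finset.prod_congr rfl (g := fun _ => upWeight q i) fun j hj => by
    rw [(Finset.mem_filter.mp hj).2], Finset.prod_const, Finset.filter_filter]
  congr 2
  refine Finset.filter_congr fun j hj => and_congr_right fun _ => ?_
  have := hs.1 j (by simp only [Finset.mem_range] at hj ⊢; omega)
  omega

lemma highPeaks_eq_filter {L : ℕ} (s : Fin L → Bool) :
    highPeaks s = (Finset.range L).filter fun i =>
      stepVal (Fin.cons false s : Fin (L + 1) → Bool) i = 1 ∧ stepVal s i ≠ 1 ∧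
        2 ≤ (pht s i).toNat := by
  ext i
  simp only [highPeaks, peaks, Finset.mem_filter, Finset.mem_Icc, Finset.mem_range]
  cases i with
  | zero => simp [stepVal_cons_zero]
  | succ i =>
    rw [stepVal_cons_succ, Nat.add_sub_cancel]
    by_cases h : i + 1 < L
    · rw [stepVal_eq_neg_one_iff s h]
      omega
    · omega

lemma zpow_sum_highPeaks_mul_prod {L : ℕ} {s : Fin L → Bool} (hs : IsDyck s) :
    q ^ (∑ i ∈ highPeaks s, (2 * pht s i + 1)) *
      ∏ i ∈ Finset.range (L + 1), (1 - q ^ (2 * pht s i + 1))⁻¹ =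
      (1 - q)⁻¹ * pathProd (highPeakStepWeight q) false 0 s := by
  have hcast : ∀ i ∈ Finset.range (L + 1),
      2 * pht s i + 1 = ((2 * (pht s i).toNat + 1 : ℕ) : ℤ) := fun i hi => by
    have := hs.1 i hi
    omega
  have hsub : highPeaks s ⊆ Finset.range (L + 1) := by
    rw [highPeaks_eq_filter]
    exact (Finset.filter_subset _ _).trans (Finset.range_subset_range.mpr L.le_succ)
  have hprod : ∏ i ∈ Finset.range (L + 1), (1 - q ^ (2 * pht s i + 1))⁻¹ =
      ∏ i ∈ Finset.range (L + 1), (1 - q ^ (2 * (pht s i).toNat + 1))⁻¹ :=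
    Finset.prod_congr rfl fun i hi => by rw [hcast i hi, zpow_natCast]
  rw [Finset.sum_congr rfl fun i hi => hcast i (hsub hi), ← Nat.cast_sum, zpow_natCast,
    ← Finset.prod_pow_eq_pow_sum, hprod, Finset.prod_range_succ, hs.2, highPeaks_eq_filter,
    Finset.prod_filter]
  simp only [pathProd, highPeakStepWeight, decide_eq_true_eq, decide_eq_false_iff_not,
    Nat.cast_zero, zero_add, Finset.prod_mul_distrib, Int.toNat_zero, mul_zero, pow_one]
  ring

end StepEncoding

lemma one_sub_ratFuncX_pow_ne_zero (m : ℕ) : 1 - (RatFunc.X : RatFunc ℚ) ^ (m + 1) ≠ 0 := by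
  rw [← RatFunc.algebraMap_X, ← map_pow, ← map_one (algebraMap (Polynomial ℚ) (RatFunc ℚ)),
    ← map_sub]
  refine RatFunc.algebraMap_ne_zero fun h => ?_
  simpa using congrArg (Polynomial.eval 0) (sub_eq_zero.mp h)

theorem statement_2 (n : ℕ) :
    (∑ s ∈ dyckPaths (2 * n),
        (RatFunc.X : RatFunc ℚ) ^ (∑ i ∈ highPeaks s, (2 * pht s i + 1)) *
          ∏ i ∈ Finset.range (2 * n + 1),
            (1 - (RatFunc.X : RatFunc ℚ) ^ (2 * pht s i + 1))⁻¹) =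
      (1 - (RatFunc.X : RatFunc ℚ))⁻¹ *
        ∑ s ∈ dyckPaths (2 * n), ∏ i ∈ Finset.range (2 * n),
          (if i % 2 = 0 then
              (RatFunc.X : RatFunc ℚ) ^ i /
                ((1 - (RatFunc.X : RatFunc ℚ) ^ (2 * i + 1)) *
                  (1 - (RatFunc.X : RatFunc ℚ) ^ (2 * i + 3)))
            else
              (RatFunc.X : RatFunc ℚ) ^ (3 * i + 2) /
                ((1 - (RatFunc.X : RatFunc ℚ) ^ (2 * i + 1)) *
                  (1 - (RatFunc.X : RatFunc ℚ) ^ (2 * i + 3)))) ^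
            ((Finset.range (2 * n)).filter fun j =>
              stepVal s j = 1 ∧ pht s j = (i : ℤ)).card := by
  rw [Finset.sum_congr rfl fun s hs => zpow_sum_highPeaks_mul_prod RatFunc.X
    (isDyck_of_mem_dyckPaths hs), ← Finset.mul_sum, sum_dyckPaths_pathProd,
    pathSum_highPeakStepWeight one_sub_ratFuncX_pow_ne_zero, ← sum_dyckPaths_pathProd]
  congr 1
  exact Finset.sum_congr rfl fun s hs =>
    (prod_upWeight_pow_card RatFunc.X (isDyck_of_mem_dyckPaths hs)).symm

end Paper
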